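/- arXiv:2105.03081 — 2 statements merged into one kernel-verified Lean document; each statement's English description precedes it below -/
import Mathlib

section
/- For every state s ∈ S: there exists a policy π with μ^π_s(Safe) = 1 if and only if there exists an action a ∈ A s with Q*(s,a) = 0. -/
open MeasureTheory Set
open scoped ENNReal Classical

variable {S : Type*}

def IsPathMeasure [MeasurableSpace S] (P : S → PMF S) (μ : S → Measure (ℕ → S)) : Prop :=
  (∀ s, IsProbabilityMeasure (μ s)) ∧
    ∀ (s : S) (n : ℕ) (x : ℕ → S),
      μ s {ω | ∀ i ≤ n, ω i = x i} =
        (if x 0 = s then 1 else 0) * ∏ i ∈ Finset.range n, (P (x i)) (x (i + 1))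

noncomputable def Rw (Acc : Set S) (γacc rn : ℝ) (s : S) : ℝ :=
  if s ∈ Acc then (1 - γacc) * rn else 0

noncomputable def Γw (Acc : Set S) (γacc γ : ℝ) (s : S) : ℝ :=
  if s ∈ Acc then γacc else γ

noncomputable def Ret (Acc : Set S) (γacc γ rn : ℝ) (ω : ℕ → S) : ℝ :=
  ∑' t : ℕ, Rw Acc γacc rn (ω (t + 1)) * ∏ k ∈ Finset.range t, Γw Acc γacc γ (ω (k + 1))

noncomputable def Val [MeasurableSpace S] (Acc : Set S) (γacc γ rn : ℝ)
    (μ : S → Measure (ℕ → S)) (s : S) : ℝ :=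
  ∫ ω, Ret Acc γacc γ rn ω ∂ (μ s)

variable {A : S → Type*}

noncomputable def Valp [MeasurableSpace S] (Acc : Set S) (γacc γ rn : ℝ)
    (μ : ((s : S) → A s) → S → Measure (ℕ → S)) (π : (s : S) → A s) (s : S) : ℝ :=
  ∫ ω, Ret Acc γacc γ rn ω ∂ (μ π s)

noncomputable def Qp [MeasurableSpace S] [Fintype S]
    (P : (s : S) → A s → PMF S) (Acc : Set S) (γacc γ rn : ℝ)
    (μ : ((s : S) → A s) → S → Measure (ℕ → S)) (π : (s : S) → A s) (s : S) (a : A s) : ℝ :=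
  ∑ s' : S, (P s a s').toReal *
    (Rw Acc γacc rn s' + Γw Acc γacc γ s' * Valp Acc γacc γ rn μ π s')

noncomputable def Qstar [MeasurableSpace S] [Fintype S]
    (P : (s : S) → A s → PMF S) (Acc : Set S) (γacc γ rn : ℝ)
    (μ : ((s : S) → A s) → S → Measure (ℕ → S)) (s : S) (a : A s) : ℝ :=
  ⨆ π : (s' : S) → A s', Qp P Acc γacc γ rn μ π s a

def WinRegion [MeasurableSpace S] (Acc : Set S)
    (μ : ((s : S) → A s) → S → Measure (ℕ → S)) : Set S :=
  {s | ∃ π : (s' : S) → A s', μ π s {ω | ∀ t, ω t ∉ Acc} = 1}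

def IsOptimal [MeasurableSpace S] (Acc : Set S) (γacc γ rn : ℝ)
    (μ : ((s : S) → A s) → S → Measure (ℕ → S)) (πo : (s : S) → A s) : Prop :=
  ∀ s, Valp Acc γacc γ rn μ πo s = ⨆ π : (s' : S) → A s', Valp Acc γacc γ rn μ π s

/-!
Whether the chain induced by a policy almost surely avoids `Acc` depends only on the supports of the
transition distributions: it does so from `s` iff no finite path of positive probability from `s`
ends in `Acc`. The set of such `s`, the safe region of the policy, is the largest set that is
disjoint from `Acc` and closed under the transitions. Hence a safe policy exists from `s` iff
`s ∉ Acc` and some action `a` at `s` leads only into the safe region `V` of some policy `π`: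
changing `π` to play `a` at `s` leaves `insert s V` closed under the transitions.

All rewards are nonpositive, so a return vanishes iff the path avoids `Acc` from time `1` on, and an
average of returns vanishes iff almost every one of them does. Hence `Q_π(s, a) = 0` iff the support
of `P s a` lies in the safe region of `π`, and the supremum defining `Q*(s, a)` is a maximum because
there are finitely many policies.
-/

theorem sum_toReal_mul_eq_zero_iff_of_nonpos {α : Type*} [Fintype α] (p : PMF α) {f : α → ℝ}
    (hf : ∀ x, f x ≤ 0) : ∑ x, (p x).toReal * f x = 0 ↔ ∀ x ∈ p.support, f x = 0 := by
  rw [Finset.sum_eq_zero_iff_of_nonpos fun x _ =>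
    mul_nonpos_of_nonneg_of_nonpos ENNReal.toReal_nonneg (hf x)]
  simp [ENNReal.toReal_eq_zero_iff, p.apply_ne_top, or_iff_not_imp_left]

theorem ciSup_eq_iff_exists_eq_of_forall_le {ι α : Type*} [Finite ι] [Nonempty ι]
    [ConditionallyCompleteLinearOrder α] {f : ι → α} {a : α} (hf : ∀ i, f i ≤ a) :
    ⨆ i, f i = a ↔ ∃ i, f i = a := by
  constructor
  · rintro rfl
    exact exists_eq_ciSup_of_finite
  · rintro ⟨i, rfl⟩
    exact le_antisymm (ciSup_le hf) (le_ciSup (finite_range f).bddAbove i)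

theorem ae_measure_preimage_singleton_ne_zero {Ω E : Type*} [MeasurableSpace Ω] [Countable E]
    (μ : Measure Ω) (f : Ω → E) : ∀ᵐ ω ∂μ, μ (f ⁻¹' {f ω}) ≠ 0 := by
  have hnull : μ (⋃ e : {e : E // μ (f ⁻¹' {e}) = 0}, f ⁻¹' {e.1}) = 0 :=
    measure_iUnion_null fun e => e.2
  refine measure_mono_null (fun ω hω => ?_) hnull
  exact mem_iUnion.2 ⟨⟨f ω, not_not.1 hω⟩, rfl⟩

section SafeRegion

/-- The first `n` steps of `x` all have positive probability under the transition function `K`. -/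
def IsPathUpTo (K : S → PMF S) (n : ℕ) (x : ℕ → S) : Prop :=
  ∀ i < n, x (i + 1) ∈ (K (x i)).support

/-- The safe region of the transition function `K` with respect to the set `B` of bad states: the
states from which no finite path of positive probability ends in `B`. -/
def safeRegion (K : S → PMF S) (B : Set S) : Set S :=
  {s | ∀ n x, x 0 = s → IsPathUpTo K n x → x n ∉ B}

variable {K : S → PMF S} {B U : Set S} {s : S}

theorem notMem_of_mem_safeRegion (hs : s ∈ safeRegion K B) : s ∉ B :=
  hs 0 (fun _ => s) rfl fun _ hi => absurd hi (Nat.not_lt_zero _)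

theorem support_subset_safeRegion (hs : s ∈ safeRegion K B) :
    (K s).support ⊆ safeRegion K B := by
  rintro _ hy n x rfl hx
  refine hs (n + 1) (fun i => Nat.casesOn i s x) rfl fun i hi => ?_
  cases i with
  | zero => exact hy
  | succ i => exact hx i (Nat.lt_of_succ_lt_succ hi)

theorem subset_safeRegion (hUB : Disjoint U B) (hU : ∀ x ∈ U, (K x).support ⊆ U) :
    U ⊆ safeRegion K B := by
  rintro _ hs n x rfl hx
  have hmem : ∀ i ≤ n, x i ∈ U := fun i => by
    induction i with
    | zero => exact fun _ => hs
    | succ i ih => exact fun hi => hU _ (ih (Nat.le_of_succ_le hi)) (hx i hi)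
  exact disjoint_left.1 hUB (hmem n le_rfl)

theorem mem_safeRegion_update {P : (s : S) → A s → PMF S} {π : (s : S) → A s} {a : A s}
    (hs : s ∉ B) (ha : (P s a).support ⊆ safeRegion (fun t => P t (π t)) B) :
    s ∈ safeRegion (fun t => P t (Function.update π s a t)) B := by
  refine subset_safeRegion (U := insert s (safeRegion (fun t => P t (π t)) B)) ?_ ?_
    (mem_insert _ _)
  · exact disjoint_left.2 (forall_mem_insert.2 ⟨hs, fun _ => notMem_of_mem_safeRegion⟩)
  · intro x hx
    refine Subset.trans ?_ (subset_insert _ _)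
    rcases eq_or_ne x s with rfl | hxs
    · rwa [Function.update_self]
    · rw [Function.update_of_ne hxs]
      exact support_subset_safeRegion (mem_of_mem_insert_of_ne hx hxs)

theorem exists_mem_safeRegion_iff (P : (s : S) → A s → PMF S) (B : Set S) (s : S) :
    (∃ π : (s : S) → A s, s ∈ safeRegion (fun t => P t (π t)) B) ↔
      s ∉ B ∧ ∃ (a : A s) (π : (s : S) → A s),
        (P s a).support ⊆ safeRegion (fun t => P t (π t)) B := by
  constructor
  · rintro ⟨π, hs⟩
    exact ⟨notMem_of_mem_safeRegion hs, π s, π, support_subset_safeRegion hs⟩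
  · rintro ⟨hs, a, π, ha⟩
    exact ⟨Function.update π s a, mem_safeRegion_update hs ha⟩

end SafeRegion

namespace IsPathMeasure

variable [MeasurableSpace S] {K : S → PMF S} {ν : S → Measure (ℕ → S)} {B : Set S}

theorem cylinder_ne_zero_iff (h : IsPathMeasure K ν) (s : S) (n : ℕ) (x : ℕ → S) :
    ν s {ω | ∀ i ≤ n, ω i = x i} ≠ 0 ↔ x 0 = s ∧ IsPathUpTo K n x := by
  simp [h.2, Finset.prod_eq_zero_iff, IsPathUpTo]

variable [Countable S]

theorem ae_isPathUpTo (h : IsPathMeasure K ν) (s : S) (n : ℕ) :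
    ∀ᵐ ω ∂ν s, ω 0 = s ∧ IsPathUpTo K n ω := by
  filter_upwards [ae_measure_preimage_singleton_ne_zero (ν s)
    fun (ω : ℕ → S) (i : Fin (n + 1)) => ω i] with ω hω
  rw [← h.cylinder_ne_zero_iff]
  convert hω using 2
  ext ω'
  simp [funext_iff, Fin.forall_iff]

theorem ae_forall_notMem_iff (h : IsPathMeasure K ν) (s : S) :
    (∀ᵐ ω ∂ν s, ∀ t, ω t ∉ B) ↔ s ∈ safeRegion K B := by
  constructor
  · intro hsafe n x hx0 hx hxB
    refine (h.cylinder_ne_zero_iff s n x).2 ⟨hx0, hx⟩ (measure_mono_null ?_ (ae_iff.1 hsafe))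
    exact fun ω hω hωB => hωB n (hω n le_rfl ▸ hxB)
  · intro hs
    filter_upwards [ae_all_iff.2 (h.ae_isPathUpTo s)] with ω hω t
    exact hs t ω (hω t).1 (hω t).2

theorem measure_forall_notMem_eq_one_iff (h : IsPathMeasure K ν) (hB : MeasurableSet B) (s : S) :
    ν s {ω | ∀ t, ω t ∉ B} = 1 ↔ s ∈ safeRegion K B := by
  have := h.1 s
  have hmeas : Measurable fun ω : ℕ → S => ∀ t, ω t ∉ B :=
    .forall fun t => hB.compl.mem.comp (measurable_pi_apply t)
  rw [← ae_iff_prob_eq_one hmeas, h.ae_forall_notMem_iff]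

theorem notMem_and_ae_forall_succ_notMem_iff (h : IsPathMeasure K ν) (s : S) :
    (s ∉ B ∧ ∀ᵐ ω ∂ν s, ∀ t, ω (t + 1) ∉ B) ↔ s ∈ safeRegion K B := by
  have := h.1 s
  have hzero : (∀ᵐ ω ∂ν s, ω 0 ∉ B) ↔ s ∉ B := by
    rw [Filter.eventually_congr ((h.ae_isPathUpTo s 0).mono fun ω hω => by rw [hω.1]),
      Filter.eventually_const]
  rw [← hzero, ← Filter.eventually_and, ← h.ae_forall_notMem_iff]
  exact Filter.eventually_congr (.of_forall fun ω =>
    Nat.and_forall_add_one (p := fun t => ω t ∉ B))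

end IsPathMeasure

section Return

variable {Acc : Set S} {rn γ γacc : ℝ}

theorem Rw_nonpos (hrn : rn ≤ 0) (hγacc : γacc ≤ 1) (s : S) : Rw Acc γacc rn s ≤ 0 := by
  unfold Rw
  split_ifs
  · exact mul_nonpos_of_nonneg_of_nonpos (sub_nonneg.2 hγacc) hrn
  · rfl

theorem Rw_eq_zero_iff (hrn : rn ≠ 0) (hγacc : γacc ≠ 1) (s : S) :
    Rw Acc γacc rn s = 0 ↔ s ∉ Acc := by
  simp [Rw, hrn, sub_eq_zero, hγacc.symm]

theorem abs_Rw_le (hγacc₀ : 0 ≤ γacc) (hγacc₁ : γacc ≤ 1) (s : S) : |Rw Acc γacc rn s| ≤ |rn| := by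
  unfold Rw
  split_ifs
  · rw [abs_mul, abs_of_nonneg (sub_nonneg.2 hγacc₁)]
    exact mul_le_of_le_one_left (abs_nonneg _) (sub_le_self _ hγacc₀)
  · simp

theorem Γw_pos (hγ : 0 < γ) (hγacc : 0 < γacc) (s : S) : 0 < Γw Acc γacc γ s := by
  unfold Γw
  split_ifs <;> assumption

theorem Γw_le_max (s : S) : Γw Acc γacc γ s ≤ max γ γacc := by
  unfold Γw
  split_ifs <;> simp

/-- The contribution to the return of `ω` of the reward received at time `t + 1`. -/
noncomputable def discountedReward (Acc : Set S) (γacc γ rn : ℝ) (ω : ℕ → S) (t : ℕ) : ℝ :=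
  Rw Acc γacc rn (ω (t + 1)) * ∏ k ∈ Finset.range t, Γw Acc γacc γ (ω (k + 1))

theorem discountedReward_nonpos (hrn : rn ≤ 0) (hγ : 0 < γ) (hγacc : 0 < γacc ∧ γacc ≤ 1)
    (ω : ℕ → S) (t : ℕ) : discountedReward Acc γacc γ rn ω t ≤ 0 :=
  mul_nonpos_of_nonpos_of_nonneg (Rw_nonpos hrn hγacc.2 _)
    (Finset.prod_nonneg fun _ _ => (Γw_pos hγ hγacc.1 _).le)

theorem discountedReward_eq_zero_iff (hrn : rn ≠ 0) (hγ : 0 < γ) (hγacc : 0 < γacc ∧ γacc ≠ 1)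
    (ω : ℕ → S) (t : ℕ) : discountedReward Acc γacc γ rn ω t = 0 ↔ ω (t + 1) ∉ Acc := by
  have hprod : ∏ k ∈ Finset.range t, Γw Acc γacc γ (ω (k + 1)) ≠ 0 :=
    Finset.prod_ne_zero_iff.2 fun _ _ => (Γw_pos hγ hγacc.1 _).ne'
  rw [discountedReward, mul_eq_zero, or_iff_left hprod, Rw_eq_zero_iff hrn hγacc.2]

theorem abs_discountedReward_le (hγ : 0 < γ) (hγacc : 0 < γacc ∧ γacc ≤ 1) (ω : ℕ → S) (t : ℕ) :
    |discountedReward Acc γacc γ rn ω t| ≤ |rn| * max γ γacc ^ t := by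
  have hΓ (k : ℕ) : 0 ≤ Γw Acc γacc γ (ω (k + 1)) := (Γw_pos hγ hγacc.1 _).le
  have hprod : ∏ k ∈ Finset.range t, Γw Acc γacc γ (ω (k + 1)) ≤ max γ γacc ^ t := by
    simpa using Finset.prod_le_prod (s := Finset.range t) (fun k _ => hΓ k)
      fun k _ => Γw_le_max (ω (k + 1))
  rw [discountedReward, abs_mul, abs_of_nonneg (Finset.prod_nonneg fun k _ => hΓ k)]
  exact mul_le_mul (abs_Rw_le hγacc.1.le hγacc.2 _) hprod
    (Finset.prod_nonneg fun k _ => hΓ k) (abs_nonneg rn)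

theorem summable_geometric_max (rn : ℝ) (hγ : 0 < γ ∧ γ < 1) (hγacc : γacc < 1) :
    Summable fun t : ℕ => |rn| * max γ γacc ^ t :=
  (summable_geometric_of_lt_one (le_max_of_le_left hγ.1.le) (max_lt hγ.2 hγacc)).mul_left _

theorem summable_discountedReward (hγ : 0 < γ ∧ γ < 1) (hγacc : 0 < γacc ∧ γacc < 1)
    (ω : ℕ → S) : Summable (discountedReward Acc γacc γ rn ω) :=
  .of_norm_bounded (summable_geometric_max rn hγ hγacc.2)
    (abs_discountedReward_le hγ.1 ⟨hγacc.1, hγacc.2.le⟩ ω)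

theorem Ret_nonpos (hrn : rn ≤ 0) (hγ : 0 < γ) (hγacc : 0 < γacc ∧ γacc ≤ 1) (ω : ℕ → S) :
    Ret Acc γacc γ rn ω ≤ 0 :=
  tsum_nonpos (discountedReward_nonpos hrn hγ hγacc ω)

theorem Ret_eq_zero_iff (hrn : rn < 0) (hγ : 0 < γ ∧ γ < 1) (hγacc : 0 < γacc ∧ γacc < 1)
    (ω : ℕ → S) : Ret Acc γacc γ rn ω = 0 ↔ ∀ t, ω (t + 1) ∉ Acc := by
  have hsum : HasSum (fun t => -discountedReward Acc γacc γ rn ω t) (-Ret Acc γacc γ rn ω) :=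
    (summable_discountedReward hγ hγacc ω).hasSum.neg
  have hnonneg (t : ℕ) : 0 ≤ -discountedReward Acc γacc γ rn ω t :=
    neg_nonneg.2 (discountedReward_nonpos hrn.le hγ.1 ⟨hγacc.1, hγacc.2.le⟩ ω t)
  have hiff : Ret Acc γacc γ rn ω = 0 ↔ HasSum (fun t => -discountedReward Acc γacc γ rn ω t) 0 :=
    ⟨fun h => by simpa only [h, neg_zero] using hsum, fun h => neg_eq_zero.1 (hsum.unique h)⟩
  rw [hiff, hasSum_zero_iff_of_nonneg hnonneg, funext_iff]
  simp [discountedReward_eq_zero_iff hrn.ne hγ.1 ⟨hγacc.1, hγacc.2.ne⟩]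

variable [MeasurableSpace S]

theorem measurable_Ret (hAcc : MeasurableSet Acc) (hγ : 0 < γ ∧ γ < 1)
    (hγacc : 0 < γacc ∧ γacc < 1) : Measurable (Ret Acc γacc γ rn) := by
  have hRw : Measurable (Rw Acc γacc rn) := .ite hAcc measurable_const measurable_const
  have hΓw : Measurable (Γw Acc γacc γ) := .ite hAcc measurable_const measurable_const
  have hpartial (n : ℕ) : Measurable fun ω : ℕ → S =>
      ∑ t ∈ Finset.range n, discountedReward Acc γacc γ rn ω t := by
    unfold discountedReward
    fun_prop
  refine measurable_of_tendsto_metrizable hpartial (tendsto_pi_nhds.2 fun ω => ?_)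
  exact (summable_discountedReward hγ hγacc ω).hasSum.tendsto_sum_nat

theorem integrable_Ret (hAcc : MeasurableSet Acc) (hγ : 0 < γ ∧ γ < 1)
    (hγacc : 0 < γacc ∧ γacc < 1) (ν : Measure (ℕ → S)) [IsFiniteMeasure ν] :
    Integrable (Ret Acc γacc γ rn) ν :=
  .of_bound (measurable_Ret hAcc hγ hγacc).aestronglyMeasurable _ <| .of_forall fun ω =>
    tsum_of_norm_bounded (summable_geometric_max rn hγ hγacc.2).hasSum
      (abs_discountedReward_le hγ.1 ⟨hγacc.1, hγacc.2.le⟩ ω)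

end Return

section Value

variable [MeasurableSpace S] {Acc : Set S} {rn γ γacc : ℝ}

theorem Val_nonpos (hrn : rn ≤ 0) (hγ : 0 < γ) (hγacc : 0 < γacc ∧ γacc ≤ 1)
    (ν : S → Measure (ℕ → S)) (s : S) : Val Acc γacc γ rn ν s ≤ 0 :=
  integral_nonpos (Ret_nonpos hrn hγ hγacc)

theorem Val_eq_zero_iff (hAcc : MeasurableSet Acc) (hrn : rn < 0) (hγ : 0 < γ ∧ γ < 1)
    (hγacc : 0 < γacc ∧ γacc < 1) (ν : S → Measure (ℕ → S)) (s : S) [IsFiniteMeasure (ν s)] :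
    Val Acc γacc γ rn ν s = 0 ↔ ∀ᵐ ω ∂ν s, ∀ t, ω (t + 1) ∉ Acc := by
  have hnonneg : 0 ≤ -Ret Acc γacc γ rn := fun ω =>
    neg_nonneg.2 (Ret_nonpos hrn.le hγ.1 ⟨hγacc.1, hγacc.2.le⟩ ω)
  have hzero := integral_eq_zero_iff_of_nonneg hnonneg (integrable_Ret hAcc hγ hγacc (ν s)).neg
  simpa [Val, integral_neg, Filter.EventuallyEq, Ret_eq_zero_iff hrn hγ hγacc] using hzero

/-- The reward for entering `s` plus the discounted value of continuing from `s`, that is, the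
quantity averaged over the successor states in the definition of `Q`. -/
noncomputable def entryValue (Acc : Set S) (γacc γ rn : ℝ) (ν : S → Measure (ℕ → S)) (s : S) : ℝ :=
  Rw Acc γacc rn s + Γw Acc γacc γ s * Val Acc γacc γ rn ν s

theorem entryValue_nonpos (hrn : rn ≤ 0) (hγ : 0 < γ) (hγacc : 0 < γacc ∧ γacc ≤ 1)
    (ν : S → Measure (ℕ → S)) (s : S) : entryValue Acc γacc γ rn ν s ≤ 0 :=
  add_nonpos (Rw_nonpos hrn hγacc.2 s)
    (mul_nonpos_of_nonneg_of_nonpos (Γw_pos hγ hγacc.1 s).le (Val_nonpos hrn hγ hγacc ν s))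

theorem entryValue_eq_zero_iff [Countable S] {K : S → PMF S} {ν : S → Measure (ℕ → S)}
    (hν : IsPathMeasure K ν) (hAcc : MeasurableSet Acc) (hrn : rn < 0) (hγ : 0 < γ ∧ γ < 1)
    (hγacc : 0 < γacc ∧ γacc < 1) (s : S) :
    entryValue Acc γacc γ rn ν s = 0 ↔ s ∈ safeRegion K Acc := by
  have := hν.1 s
  have hΓw : 0 < Γw Acc γacc γ s := Γw_pos hγ.1 hγacc.1 s
  have hRw : Rw Acc γacc rn s ≤ 0 := Rw_nonpos hrn.le hγacc.2.le s
  have hΓwVal : Γw Acc γacc γ s * Val Acc γacc γ rn ν s ≤ 0 :=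
    mul_nonpos_of_nonneg_of_nonpos hΓw.le (Val_nonpos hrn.le hγ.1 ⟨hγacc.1, hγacc.2.le⟩ ν s)
  have hadd : entryValue Acc γacc γ rn ν s = 0 ↔
      Rw Acc γacc rn s = 0 ∧ Γw Acc γacc γ s * Val Acc γacc γ rn ν s = 0 := by
    rw [entryValue, ← neg_eq_zero, neg_add,
      add_eq_zero_iff_of_nonneg (neg_nonneg.2 hRw) (neg_nonneg.2 hΓwVal), neg_eq_zero, neg_eq_zero]
  rw [hadd, Rw_eq_zero_iff hrn.ne hγacc.2.ne, mul_eq_zero, or_iff_right hΓw.ne',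
    Val_eq_zero_iff hAcc hrn hγ hγacc, hν.notMem_and_ae_forall_succ_notMem_iff]

variable [Fintype S] {P : (s : S) → A s → PMF S} {μ : ((s : S) → A s) → S → Measure (ℕ → S)}

theorem Qp_nonpos (hrn : rn ≤ 0) (hγ : 0 < γ) (hγacc : 0 < γacc ∧ γacc ≤ 1)
    (π : (s : S) → A s) (s : S) (a : A s) : Qp P Acc γacc γ rn μ π s a ≤ 0 :=
  Finset.sum_nonpos fun s' _ => mul_nonpos_of_nonneg_of_nonpos ENNReal.toReal_nonneg
    (entryValue_nonpos hrn hγ hγacc (μ π) s')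

theorem Qp_eq_zero_iff {π : (s : S) → A s} (hμ : IsPathMeasure (fun t => P t (π t)) (μ π))
    (hAcc : MeasurableSet Acc) (hrn : rn < 0) (hγ : 0 < γ ∧ γ < 1)
    (hγacc : 0 < γacc ∧ γacc < 1) (s : S) (a : A s) :
    Qp P Acc γacc γ rn μ π s a = 0 ↔
      (P s a).support ⊆ safeRegion (fun t => P t (π t)) Acc :=
  (sum_toReal_mul_eq_zero_iff_of_nonpos (P s a)
    (entryValue_nonpos hrn.le hγ.1 ⟨hγacc.1, hγacc.2.le⟩ (μ π))).trans <|
    forall₂_congr fun s' _ => entryValue_eq_zero_iff hμ hAcc hrn hγ hγacc s'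

theorem Qstar_eq_zero_iff [∀ s, Finite (A s)] [∀ s, Nonempty (A s)]
    (hμ : ∀ π : (s : S) → A s, IsPathMeasure (fun s => P s (π s)) (μ π))
    (hAcc : MeasurableSet Acc) (hrn : rn < 0) (hγ : 0 < γ ∧ γ < 1)
    (hγacc : 0 < γacc ∧ γacc < 1) (s : S) (a : A s) :
    Qstar P Acc γacc γ rn μ s a = 0 ↔
      ∃ π : (s : S) → A s, (P s a).support ⊆ safeRegion (fun t => P t (π t)) Acc :=
  (ciSup_eq_iff_exists_eq_of_forall_le fun π =>
    Qp_nonpos hrn.le hγ.1 ⟨hγacc.1, hγacc.2.le⟩ π s a).trans <|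
    exists_congr fun π => Qp_eq_zero_iff (hμ π) hAcc hrn hγ hγacc s a

theorem notMem_of_Qstar_eq_zero [∀ s, Finite (A s)] [∀ s, Nonempty (A s)]
    (hμ : ∀ π : (s : S) → A s, IsPathMeasure (fun s => P s (π s)) (μ π))
    (hAcc : MeasurableSet Acc) (hrn : rn < 0) (hγ : 0 < γ ∧ γ < 1)
    (hγacc : 0 < γacc ∧ γacc < 1) {s : S} {a : A s} (habs : s ∈ Acc → (P s a).support ⊆ Acc)
    (ha : Qstar P Acc γacc γ rn μ s a = 0) : s ∉ Acc := by
  obtain ⟨π, hπ⟩ := (Qstar_eq_zero_iff hμ hAcc hrn hγ hγacc s a).1 ha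
  obtain ⟨y, hy⟩ := (P s a).support_nonempty
  exact fun hs => notMem_of_mem_safeRegion (hπ hy) (habs hs hy)

theorem exists_safe_policy_iff_exists_Qstar_zero_general
    [∀ s, Finite (A s)] [∀ s, Nonempty (A s)]
    (P : (s : S) → A s → PMF S) (Acc : Set S) (hAcc : MeasurableSet Acc)
    (μ : ((s : S) → A s) → S → Measure (ℕ → S))
    (hμ : ∀ π : (s : S) → A s, IsPathMeasure (fun s => P s (π s)) (μ π))
    (rn γ γacc : ℝ) (hrn : rn < 0) (hγ : 0 < γ ∧ γ < 1) (hγacc : 0 < γacc ∧ γacc < 1)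
    (s : S) :
    (∃ π : (s : S) → A s, μ π s {ω | ∀ t, ω t ∉ Acc} = 1) ↔
      s ∉ Acc ∧ ∃ a : A s, Qstar P Acc γacc γ rn μ s a = 0 := by
  simp only [fun π => (hμ π).measure_forall_notMem_eq_one_iff hAcc s,
    Qstar_eq_zero_iff hμ hAcc hrn hγ hγacc]
  exact exists_mem_safeRegion_iff P Acc s

end Value

/-- there is a policy that is almost surely safe from `s` iff some action
`a` at `s` has optimal state-action value `Q*(s,a) = 0`. -/
theorem exists_safe_policy_iff_exists_Qstar_zero
    [Fintype S] [Nonempty S] [MeasurableSpace S] [MeasurableSingletonClass S]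
    [∀ s, Fintype (A s)] [∀ s, Nonempty (A s)]
    (P : (s : S) → A s → PMF S) (Acc : Set S)
    (habs : ∀ s ∈ Acc, ∀ a : A s, (P s a).support ⊆ Acc)
    (μ : ((s : S) → A s) → S → Measure (ℕ → S))
    (hμ : ∀ π : (s : S) → A s, IsPathMeasure (fun s => P s (π s)) (μ π))
    (rn γ γacc : ℝ) (hrn : rn < 0) (hγ : 0 < γ ∧ γ < 1) (hγacc : 0 < γacc ∧ γacc < 1)
    (s : S) :
    (∃ π : (s : S) → A s, μ π s {ω | ∀ t, ω t ∉ Acc} = 1) ↔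
      ∃ a : A s, Qstar P Acc γacc γ rn μ s a = 0 := by
  have hAcc : MeasurableSet Acc := Acc.toFinite.measurableSet
  exact (exists_safe_policy_iff_exists_Qstar_zero_general P Acc hAcc μ hμ rn γ γacc hrn hγ hγacc
    s).trans <| and_iff_right_of_imp fun ⟨a, ha⟩ =>
      notMem_of_Qstar_eq_zero hμ hAcc hrn hγ hγacc (habs s · a) ha
end

section
/- Let S be a finite type, for each s ∈ S let A s be a nonempty finite set of actions, and let α ∈ (0,1). Let (Q^k)_{k∈ℕ} be any sequence of functions on pairs {(s,a) : s ∈ S, a ∈ A s} such that Q^0(s,a) ≤ 0 for all pairs, and for every k, Q^{k+1} is obtained from Q^k by updating an arbitrary set of pairs, where each updated pair (s,a) receives the value Q^{k+1}(s,a) = (1 − α)·Q^k(s,a) + α·(r + g·max_{a' ∈ A s'} Q^k(s',a')) for some s' ∈ S, some r ≤ 0, and some g ∈ [0,1], while all other pairs keep their value. Then: (i) Q^k(s,a) ≤ 0 for every k and every pair (s,a); and (ii) if Q^{k'}(s,a) < 0 for some k', then Q^k(s,a) < 0 for every k ≥ k'. Consequently, the sets W^k_p = {(s,a) : Q^k(s,a)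 = 0} and W^k = {s : ∃ a ∈ A s, Q^k(s,a) = 0} are monotonically nonincreasing in k. -/
/-!
An update moves each value a fraction `α < 1` of the way towards a target, and the target is
nonpositive as long as all current values are (for a value that is kept, the target is the value
itself). Hence values stay nonpositive, and a negative value, whose weight `1 - α` is positive,
stays negative; equivalently, a zero value was already zero before the update.
-/

/-- `IsAsyncQUpdate α q q'`: the action values `q'` arise from `q` by one asynchronous Q-learning
update with learning rates `α` and nonpositive rewards. The set of updated pairs is left implicit:
every pair either keeps its value or moves towards the target of some successor state `s'`,
reward `r` and discount `g`, all three of which may depend on the pair. With infinitely many actions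
the supremum has its default value `0` where `q s'` is unbounded above. -/
def IsAsyncQUpdate {S : Type*} {A : S → Type*} (α q q' : (s : S) → A s → ℝ) : Prop :=
  ∀ (s : S) (a : A s), q' s a = q s a ∨
    ∃ (s' : S) (r g : ℝ), r ≤ 0 ∧ 0 ≤ g ∧
      q' s a = (1 - α s a) * q s a + α s a * (r + g * ⨆ a' : A s', q s' a')

namespace IsAsyncQUpdate

variable {S : Type*} {A : S → Type*} [∀ s, Nonempty (A s)]

section Step

variable {α q q' : (s : S) → A s → ℝ} {s : S} {a : A s}

theorem exists_target_nonpos (h : IsAsyncQUpdate α q q') (hq : ∀ s a, q s a ≤ 0)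
    (s : S) (a : A s) : ∃ t ≤ 0, q' s a = (1 - α s a) * q s a + α s a * t := by
  rcases h s a with hkeep | ⟨s', r, g, hr, hg, hmove⟩
  · exact ⟨q s a, hq s a, by rw [hkeep]; ring⟩
  · have max_nonpos : ⨆ a', q s' a' ≤ 0 := ciSup_le (hq s')
    exact ⟨_, add_nonpos hr (mul_nonpos_of_nonneg_of_nonpos hg max_nonpos), hmove⟩

theorem nonpos (h : IsAsyncQUpdate α q q') (hq : ∀ s a, q s a ≤ 0)
    (hα₀ : 0 ≤ α s a) (hα₁ : α s a ≤ 1) : q' s a ≤ 0 := by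
  obtain ⟨t, ht, h_eq⟩ := h.exists_target_nonpos hq s a
  rw [h_eq]
  exact add_nonpos (mul_nonpos_of_nonneg_of_nonpos (sub_nonneg.2 hα₁) (hq s a))
    (mul_nonpos_of_nonneg_of_nonpos hα₀ ht)

theorem neg_of_neg (h : IsAsyncQUpdate α q q') (hq : ∀ s a, q s a ≤ 0)
    (hα₀ : 0 ≤ α s a) (hα₁ : α s a < 1) (hneg : q s a < 0) : q' s a < 0 := by
  obtain ⟨t, ht, h_eq⟩ := h.exists_target_nonpos hq s a
  rw [h_eq]
  exact add_neg_of_neg_of_nonpos (mul_neg_of_pos_of_neg (sub_pos.2 hα₁) hneg)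
    (mul_nonpos_of_nonneg_of_nonpos hα₀ ht)

theorem eq_zero_of_eq_zero (h : IsAsyncQUpdate α q q') (hq : ∀ s a, q s a ≤ 0)
    (hα₀ : 0 ≤ α s a) (hα₁ : α s a < 1) (hzero : q' s a = 0) : q s a = 0 :=
  (hq s a).eq_of_not_lt fun hneg => (h.neg_of_neg hq hα₀ hα₁ hneg).ne hzero

end Step

section Iterates

variable {α Q : ℕ → (s : S) → A s → ℝ}

theorem iterate_nonpos (h : ∀ k, IsAsyncQUpdate (α k) (Q k) (Q (k + 1)))
    (hα₀ : ∀ k s a, 0 ≤ α k s a) (hα₁ : ∀ k s a, α k s a ≤ 1) (h0 : ∀ s a, Q 0 s a ≤ 0)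
    (k : ℕ) : ∀ s a, Q k s a ≤ 0 := by
  induction k with
  | zero => exact h0
  | succ k ih => exact fun s a => (h k).nonpos ih (hα₀ k s a) (hα₁ k s a)

theorem antitone_setOf_eq_zero (h : ∀ k, IsAsyncQUpdate (α k) (Q k) (Q (k + 1)))
    (hα₀ : ∀ k s a, 0 ≤ α k s a) (hα₁ : ∀ k s a, α k s a < 1) (h0 : ∀ s a, Q 0 s a ≤ 0) :
    Antitone fun k => {p : Σ s : S, A s | Q k p.1 p.2 = 0} :=
  antitone_nat_of_succ_le fun k ⟨s, a⟩ hzero =>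
    (h k).eq_zero_of_eq_zero (iterate_nonpos h hα₀ (fun k s a => (hα₁ k s a).le) h0 k)
      (hα₀ k s a) (hα₁ k s a) hzero

end Iterates

end IsAsyncQUpdate

theorem qlearning_nonpos_and_monotone_general
    {S : Type*} {A : S → Type*} [∀ s, Nonempty (A s)] {α Q : ℕ → (s : S) → A s → ℝ}
    (hα₀ : ∀ k s a, 0 ≤ α k s a) (hα₁ : ∀ k s a, α k s a < 1) (h0 : ∀ s a, Q 0 s a ≤ 0)
    (hupd : ∀ k, IsAsyncQUpdate (α k) (Q k) (Q (k + 1))) :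
    (∀ (k : ℕ) (s : S) (a : A s), Q k s a ≤ 0) ∧
      (∀ (k' k : ℕ) (s : S) (a : A s), k' ≤ k → Q k' s a < 0 → Q k s a < 0) ∧
      (Antitone fun k => {p : Σ s : S, A s | Q k p.1 p.2 = 0}) ∧
      (Antitone fun k => {s : S | ∃ a : A s, Q k s a = 0}) := by
  have nonpos := IsAsyncQUpdate.iterate_nonpos hupd hα₀ (fun k s a => (hα₁ k s a).le) h0
  have antitone_pairs := IsAsyncQUpdate.antitone_setOf_eq_zero hupd hα₀ hα₁ h0
  have zero_of_le {k' k : ℕ} (hk : k' ≤ k) (s : S) (a : A s) : Q k s a = 0 → Q k' s a = 0 :=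
    @antitone_pairs k' k hk ⟨s, a⟩
  refine ⟨nonpos, fun k' k s a hk hneg => ?_, antitone_pairs, fun k' k hk s => ?_⟩
  · exact (nonpos k s a).lt_of_ne fun hzero => hneg.ne (zero_of_le hk s a hzero)
  · exact fun ⟨a, hzero⟩ => ⟨a, zero_of_le hk s a hzero⟩

/-- for asynchronous Q-learning updates with constant learning rate
`α ∈ (0,1)`, nonpositive rewards and discounts in `[0,1]`, the iterates stay
nonpositive, a value once negative stays negative, and the estimated winning pair set
and estimated winning region are monotonically nonincreasing. -/
theorem qlearning_nonpos_and_monotone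
    {S : Type*} [Fintype S] {A : S → Type*} [∀ s, Fintype (A s)] [∀ s, Nonempty (A s)]
    (α : ℝ) (hα : 0 < α ∧ α < 1)
    (Q : ℕ → (s : S) → A s → ℝ)
    (h0 : ∀ (s : S) (a : A s), Q 0 s a ≤ 0)
    (hupd : ∀ (k : ℕ) (s : S) (a : A s),
      Q (k + 1) s a = Q k s a ∨
        ∃ (s' : S) (r g : ℝ), r ≤ 0 ∧ 0 ≤ g ∧ g ≤ 1 ∧
          Q (k + 1) s a = (1 - α) * Q k s a + α * (r + g * (⨆ a' : A s', Q k s' a'))) :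
    (∀ (k : ℕ) (s : S) (a : A s), Q k s a ≤ 0) ∧
      (∀ (k' k : ℕ) (s : S) (a : A s), k' ≤ k → Q k' s a < 0 → Q k s a < 0) ∧
      (∀ k : ℕ, {p : Σ s : S, A s | Q (k + 1) p.1 p.2 = 0} ⊆
        {p : Σ s : S, A s | Q k p.1 p.2 = 0}) ∧
      (∀ k : ℕ, {s : S | ∃ a : A s, Q (k + 1) s a = 0} ⊆
        {s : S | ∃ a : A s, Q k s a = 0}) := by
  obtain ⟨nonpos, neg, pairs, region⟩ := qlearning_nonpos_and_monotone_general
    (α := fun _ _ _ => α) (fun _ _ _ => hα.1.le) (fun _ _ _ => hα.2) h0 fun k s a =>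
      (hupd k s a).imp_right fun ⟨s', r, g, hr, hg, _, hmove⟩ => ⟨s', r, g, hr, hg, hmove⟩
  exact ⟨nonpos, neg, fun k => pairs k.le_succ, fun k => region k.le_succ⟩
end
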